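/- Let T_n be uniformly distributed over the set of plane trees with n edges and let T_∞ be the uniform infinite plane tree. For every k ≥ 0, the truncation [T_n]_k (the plane tree obtained by keeping only the first k generations) converges in distribution, as n → ∞, to [T_∞]_k: for every fixed finite plane tree τ of height at most k, the probability that [T_n]_k = τ converges to the probability that [T_∞]_k = τ. -/

import Mathlib

open MeasureTheory ProbabilityTheory
open scoped ENNReal

/-- An infinite plane tree, encoded by its set of vertices in Ulam–Harris labelling
(a vertex is the list of child-indices on the path from the root `[]` to it):
the root belongs to the tree, the vertex set is closed under taking parents and
left siblings, and every vertex has finitely many children. -/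
def IsTree (t : List ℕ → Bool) : Prop :=
  t [] = true ∧
  (∀ u i, t (u ++ [i]) = true → t u = true) ∧
  (∀ u i j, j ≤ i → t (u ++ [i]) = true → t (u ++ [j]) = true) ∧
  (∀ u, {i : ℕ | t (u ++ [i]) = true}.Finite)

/-- A finite plane tree in Ulam–Harris labelling. -/
def IsFinTree (t : List ℕ → Bool) : Prop :=
  t [] = true ∧
  (∀ u i, t (u ++ [i]) = true → t u = true) ∧
  (∀ u i j, j ≤ i → t (u ++ [i]) = true → t (u ++ [j]) = true) ∧
  {u | t u = true}.Finite

/-- `T` is distributed as the uniform infinite plane tree (the critical geometric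
Galton–Watson tree conditioned to survive): `T` is almost surely a tree and, for every `k`
and every finite plane tree `t₀` of height at most `k`, the probability that the first `k`
generations of `T` coincide with `t₀` equals
`z_k(t₀) · ∏_{|u| < k} 2^{-(c_u(t₀)+1)}
  = z_k(t₀) · (1/2)^{#{u ∈ t₀ : |u| < k} + #t₀ - 1}`,
where `z_k(t₀)` is the number of vertices of `t₀` at generation `k` and `c_u(t₀)` the number
of children of `u` in `t₀` (each vertex of `t₀` other than the root being the child of a
unique vertex at generation `< k`). -/
def HasUIPTLaw {Ω : Type*} [MeasurableSpace Ω] (P : Measure Ω)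
    (T : Ω → List ℕ → Bool) : Prop :=
  (∀ᵐ ω ∂P, IsTree (T ω)) ∧
  ∀ (k : ℕ) (t₀ : List ℕ → Bool), IsFinTree t₀ → (∀ u, t₀ u = true → u.length ≤ k) →
    P {ω | ∀ u : List ℕ, u.length ≤ k → T ω u = t₀ u}
      = (Nat.card {u : List ℕ | t₀ u = true ∧ u.length = k} : ℝ≥0∞) *
        (2 : ℝ≥0∞)⁻¹ ^
          (Nat.card {u : List ℕ | t₀ u = true ∧ u.length < k}
            + Nat.card {u : List ℕ | t₀ u = true} - 1)

/-- The number of vertices of the tree `t` within graph distance `r` of the root. -/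
noncomputable def ballCount (t : List ℕ → Bool) (r : ℕ) : ℝ≥0∞ :=
  ∑' u : List ℕ, if t u = true ∧ u.length ≤ r then 1 else 0

/-!
Write `z` for the number of vertices of `t₀` at generation `k`, `b` for the number of its vertices
at lower generations, and `e = b + z - 1` for the number of its edges. A tree with first `k`
generations `t₀` is obtained by grafting arbitrary trees at the `z` vertices of generation `k`, so
that `[X ^ m] C ^ z` of these trees have `e + m` edges, where `C` is the generating function of the
Catalan numbers. Since `C ^ (z + 1) = C ^ z + X * C ^ (z + 2)` and consecutive Catalan numbers have
a ratio tending to `4`, induction on `z` shows that `[X ^ m] C ^ z` is equivalent to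
`z * 2 ^ (z - 1) * catalan m`. The proportion of these trees among those with `e + m` edges thus
tends to `z * 2 ^ (z - 1) * 4 ^ (-e) = z * 2 ^ (-(b + e))`, the value in the law of `T_∞`.
-/

theorem modifyHead_eq_cons_iff {α : Type*} {f : α → α} {l l' : List α} {a : α} :
    l.modifyHead f = a :: l' ↔ ∃ b, f b = a ∧ l = b :: l' := by
  cases l <;> simp

theorem modifyHead_injective {α : Type*} {f : α → α} (hf : f.Injective) :
    (List.modifyHead f).Injective := by
  rintro (_ | ⟨a, l⟩) (_ | ⟨b, l'⟩) h
  · rfl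
  · simp at h
  · simp at h
  · simpa [hf.eq_iff] using h

/-- A finite plane tree, encoded by the finite set of its vertices in Ulam–Harris labelling. It
carries the same data as a function satisfying `IsFinTree`, which is the indicator function of
such a set; see `FinPlaneTree.equivIsFinTree`. -/
@[ext]
structure FinPlaneTree where
  vertices : Finset (List ℕ)
  nil_mem : [] ∈ vertices
  parent_mem {u : List ℕ} {i : ℕ} : u ++ [i] ∈ vertices → u ∈ vertices
  sibling_mem {u : List ℕ} {i j : ℕ} : j ≤ i → u ++ [i] ∈ vertices → u ++ [j] ∈ vertices

namespace FinPlaneTree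

open Finset

variable {t t₀ : FinPlaneTree} {k : ℕ}

/-- The indicator function of the set of vertices, which is the encoding of `t` as a function
satisfying `IsFinTree`. -/
def indicator (t : FinPlaneTree) (u : List ℕ) : Bool := decide (u ∈ t.vertices)

@[simp]
theorem indicator_eq_true {u : List ℕ} : t.indicator u = true ↔ u ∈ t.vertices := by
  simp [indicator]

theorem isFinTree_indicator (t : FinPlaneTree) : IsFinTree t.indicator :=
  ⟨by simpa using t.nil_mem,
    by simpa using fun _ _ => t.parent_mem,
    by simpa using fun _ _ _ => t.sibling_mem,
    by simp⟩

/-- Finite plane trees correspond to the functions satisfying `IsFinTree` through the indicator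
functions of their vertex sets. -/
noncomputable def equivIsFinTree : FinPlaneTree ≃ {t : List ℕ → Bool // IsFinTree t} where
  toFun t := ⟨t.indicator, t.isFinTree_indicator⟩
  invFun t :=
    { vertices := t.2.2.2.2.toFinset
      nil_mem := by simpa using t.2.1
      parent_mem := fun h => by simpa using t.2.2.1 _ _ (by simpa using h)
      sibling_mem := fun hij h => by simpa using t.2.2.2.1 _ _ _ hij (by simpa using h) }
  left_inv t := by ext; simp
  right_inv t := by ext; simp [indicator]

theorem exists_indicator_eq {f : List ℕ → Bool} (hf : IsFinTree f) :
    ∃ t : FinPlaneTree, t.indicator = f :=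
  ⟨equivIsFinTree.symm ⟨f, hf⟩, congrArg Subtype.val (equivIsFinTree.apply_symm_apply ⟨f, hf⟩)⟩

theorem natCard_isFinTree_and (p : (List ℕ → Bool) → Prop) :
    Nat.card {f | IsFinTree f ∧ p f} = Nat.card {t : FinPlaneTree // p t.indicator} :=
  Nat.card_congr <| (Equiv.subtypeSubtypeEquivSubtypeInter IsFinTree p).symm.trans
    (equivIsFinTree.subtypeEquiv fun _ => Iff.rfl).symm

theorem mem_of_append_mem {u v : List ℕ} (h : u ++ v ∈ t.vertices) : u ∈ t.vertices := by
  induction v using List.reverseRecOn with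
  | nil => simpa using h
  | append_singleton v i ih => exact ih (t.parent_mem (by simpa using h))

/-- The number of edges of a finite plane tree, one less than the number of its vertices. -/
def numEdges (t : FinPlaneTree) : ℕ := #t.vertices - 1

theorem numEdges_add_one (t : FinPlaneTree) : t.numEdges + 1 = #t.vertices :=
  Nat.sub_add_cancel (card_pos.2 ⟨[], t.nil_mem⟩)

theorem natCard_indicator_eq_add_one_iff {n : ℕ} :
    Nat.card {u | t.indicator u = true} = n + 1 ↔ t.numEdges = n := by
  rw [← Nat.add_right_cancel_iff (n := 1) (m := t.numEdges), numEdges_add_one]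
  simp

/-- The tree formed by the descendants of a vertex `u`, relabelled so that `u` is the root. -/
noncomputable def subtree (t : FinPlaneTree) (u : List ℕ) (hu : u ∈ t.vertices) : FinPlaneTree where
  vertices := t.vertices.preimage (u ++ ·) (List.append_right_injective u).injOn
  nil_mem := by simpa using hu
  parent_mem h := by
    rw [mem_preimage, ← List.append_assoc] at h
    exact mem_preimage.2 (t.parent_mem h)
  sibling_mem hij h := by
    rw [mem_preimage, ← List.append_assoc] at h ⊢
    exact t.sibling_mem hij h

@[simp]
theorem mem_subtree {u v : List ℕ} {hu : u ∈ t.vertices} :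
    v ∈ (t.subtree u hu).vertices ↔ u ++ v ∈ t.vertices := by
  simp [subtree]

/-! ### Plane trees and binary trees -/

/-- The tree with no edge. -/
def root : FinPlaneTree where
  vertices := {[]}
  nil_mem := by simp
  parent_mem := by simp
  sibling_mem := by simp

@[simp]
theorem numEdges_root : root.numEdges = 0 :=
  rfl

/-- The tree obtained from `b` by attaching `a` as the subtree of a new leftmost child of the
root: the subtrees at the children of the root are `a`, followed by those of `b`. -/
def cons (a b : FinPlaneTree) : FinPlaneTree where
  vertices := a.vertices.image (0 :: ·) ∪ b.vertices.image (List.modifyHead (· + 1))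
  nil_mem := by simpa using b.nil_mem
  parent_mem {u i} := by
    rcases u with _ | ⟨_ | j, u⟩
    · simp [b.nil_mem]
    · simpa [modifyHead_eq_cons_iff] using a.parent_mem
    · simpa [modifyHead_eq_cons_iff] using b.parent_mem (u := j :: u)
  sibling_mem {u i j} hij := by
    rcases u with _ | ⟨_ | c, u⟩
    · rcases i with _ | i <;> rcases j with _ | j
      · exact id
      · omega
      · simp [a.nil_mem]
      · simpa [modifyHead_eq_cons_iff] using b.sibling_mem (u := []) (Nat.le_of_succ_le_succ hij)
    · simpa [modifyHead_eq_cons_iff] using a.sibling_mem hij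
    · simpa [modifyHead_eq_cons_iff] using b.sibling_mem (u := c :: u) hij

@[simp]
theorem zero_cons_mem_cons {a b : FinPlaneTree} {u : List ℕ} :
    0 :: u ∈ (cons a b).vertices ↔ u ∈ a.vertices := by
  simp [cons, modifyHead_eq_cons_iff]

@[simp]
theorem succ_cons_mem_cons {a b : FinPlaneTree} {i : ℕ} {u : List ℕ} :
    (i + 1) :: u ∈ (cons a b).vertices ↔ i :: u ∈ b.vertices := by
  simp [cons, modifyHead_eq_cons_iff]

theorem numEdges_cons (a b : FinPlaneTree) :
    (cons a b).numEdges = a.numEdges + b.numEdges + 1 := by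
  have hdisj : Disjoint (a.vertices.image (0 :: ·)) (b.vertices.image (List.modifyHead (· + 1))) :=
    disjoint_left.2 fun u ha hb => by
      obtain ⟨v, -, rfl⟩ := mem_image.1 ha
      simp [modifyHead_eq_cons_iff] at hb
  have hcard : #(cons a b).vertices = #a.vertices + #b.vertices := by
    rw [cons, card_union_of_disjoint hdisj, card_image_of_injective _ List.cons_injective,
      card_image_of_injective _ (modifyHead_injective (add_left_injective 1))]
  simp only [← numEdges_add_one] at hcard
  omega

theorem cons_injective2 : Function.Injective2 cons := by
  intro a a' b b' h
  have hmem (u : List ℕ) : u ∈ (cons a b).vertices ↔ u ∈ (cons a' b').vertices := by rw [h]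
  constructor
  · ext u
    simpa using hmem (0 :: u)
  · ext u
    rcases u with _ | ⟨i, u⟩
    · simp [nil_mem]
    · simpa using hmem ((i + 1) :: u)

/-- The tree obtained by deleting the leftmost child of the root and its descendants. -/
noncomputable def tail (t : FinPlaneTree) : FinPlaneTree where
  vertices := t.vertices.preimage (List.modifyHead (· + 1))
    (modifyHead_injective (add_left_injective 1)).injOn
  nil_mem := by simpa using t.nil_mem
  parent_mem {u i} := by
    rcases u with _ | ⟨j, u⟩
    · simp [t.nil_mem]
    · simpa using t.parent_mem (u := (j + 1) :: u)
  sibling_mem {u i j} hij := by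
    rcases u with _ | ⟨c, u⟩
    · simpa using t.sibling_mem (u := []) (Nat.succ_le_succ hij)
    · simpa using t.sibling_mem (u := (c + 1) :: u) hij

theorem cons_subtree_tail (h : [0] ∈ t.vertices) : cons (t.subtree [0] h) t.tail = t := by
  ext u
  rcases u with _ | ⟨_ | i, u⟩ <;> simp [nil_mem, tail]

theorem eq_root_of_singleton_zero_notMem (h : [0] ∉ t.vertices) : t = root := by
  ext u
  rcases u with _ | ⟨i, u⟩
  · simp [nil_mem]
  · have hi : i :: u ∉ t.vertices := fun hu =>
      h (t.sibling_mem (u := []) i.zero_le (mem_of_append_mem (u := [i]) hu))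
    simp [hi, root]

/-- The rotation correspondence: the left subtree of a binary tree encodes the subtree at the
leftmost child of the root, and its right subtree encodes what remains of the plane tree. -/
def ofBinaryTree : BinaryTree Unit → FinPlaneTree
  | .nil => root
  | .node _ a b => cons (ofBinaryTree a) (ofBinaryTree b)

@[simp]
theorem numEdges_ofBinaryTree (b : BinaryTree Unit) :
    (ofBinaryTree b).numEdges = b.numNodes := by
  induction b with
  | nil => rfl
  | node _ a b iha ihb => rw [ofBinaryTree, numEdges_cons, iha, ihb, BinaryTree.numNodes]

theorem ofBinaryTree_injective : Function.Injective ofBinaryTree := by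
  intro b b' h
  induction b generalizing b' with
  | nil =>
    cases b' with
    | nil => rfl
    | node => simpa [ofBinaryTree, numEdges_cons] using congrArg numEdges h
  | node _ a b iha ihb =>
    cases b' with
    | nil => simpa [ofBinaryTree, numEdges_cons] using congrArg numEdges h
    | node _ a' b' =>
      obtain ⟨ha, hb⟩ := cons_injective2 h
      rw [iha ha, ihb hb]

theorem ofBinaryTree_surjective : Function.Surjective ofBinaryTree := by
  intro t
  induction hn : t.numEdges using Nat.strong_induction_on generalizing t with
  | _ n ih =>
    by_cases h : [0] ∈ t.vertices
    · have hcons := cons_subtree_tail h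
      have hedges := numEdges_cons (t.subtree [0] h) t.tail
      rw [hcons] at hedges
      obtain ⟨a, ha⟩ := ih _ (by omega) (t.subtree [0] h) rfl
      obtain ⟨b, hb⟩ := ih _ (by omega) t.tail rfl
      exact ⟨.node () a b, by rw [ofBinaryTree, ha, hb, hcons]⟩
    · exact ⟨.nil, (eq_root_of_singleton_zero_notMem h).symm⟩

theorem ofBinaryTree_bijective : Function.Bijective ofBinaryTree :=
  ⟨ofBinaryTree_injective, ofBinaryTree_surjective⟩

/-- The rotation correspondence between plane trees with `n` edges and binary trees with `n`
nodes. -/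
noncomputable def binaryTreeEquiv (n : ℕ) :
    BinaryTree.treesOfNumNodesEq n ≃ {t : FinPlaneTree // t.numEdges = n} :=
  (Equiv.ofBijective ofBinaryTree ofBinaryTree_bijective).subtypeEquiv fun b => by
    rw [Equiv.ofBijective_apply, numEdges_ofBinaryTree, BinaryTree.mem_treesOfNumNodesEq]

instance finite_numEdges_eq (n : ℕ) : Finite {t : FinPlaneTree // t.numEdges = n} :=
  .of_equiv _ (binaryTreeEquiv n)

theorem natCard_numEdges_eq (n : ℕ) :
    Nat.card {t : FinPlaneTree // t.numEdges = n} = catalan n := by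
  rw [← Nat.card_congr (binaryTreeEquiv n), Nat.card_eq_finsetCard,
    BinaryTree.treesOfNumNodesEq_card_eq_catalan]

/-! ### Trees with prescribed first generations -/

/-- The truncation `[t]_k`, formed by the first `k` generations of `t`. -/
def truncate (t : FinPlaneTree) (k : ℕ) : FinPlaneTree where
  vertices := {u ∈ t.vertices | u.length ≤ k}
  nil_mem := by simp [t.nil_mem]
  parent_mem h := by
    simp only [mem_filter, List.length_append, List.length_singleton] at h ⊢
    exact ⟨t.parent_mem h.1, by omega⟩
  sibling_mem hij h := by
    simp only [mem_filter, List.length_append, List.length_singleton] at h ⊢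
    exact ⟨t.sibling_mem hij h.1, h.2⟩

@[simp]
theorem mem_truncate {u : List ℕ} :
    u ∈ (t.truncate k).vertices ↔ u ∈ t.vertices ∧ u.length ≤ k := by
  simp [truncate]

theorem truncate_eq_self_iff : t.truncate k = t ↔ ∀ u ∈ t.vertices, u.length ≤ k := by
  simp [FinPlaneTree.ext_iff, Finset.ext_iff]

theorem truncate_eq_iff_forall_indicator_eq (h₀ : t₀.truncate k = t₀) :
    t.truncate k = t₀ ↔ ∀ u : List ℕ, u.length ≤ k → t.indicator u = t₀.indicator u := by
  rw [← h₀]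
  simp only [FinPlaneTree.ext_iff, Finset.ext_iff, mem_truncate, and_congr_left_iff, indicator,
    decide_eq_decide]
  exact forall_congr' fun u => imp_congr_right fun hu => by simp [hu]

/-- The vertices at generation `k`. -/
def level (t : FinPlaneTree) (k : ℕ) : Finset (List ℕ) := {u ∈ t.vertices | u.length = k}

@[simp]
theorem mem_level {u : List ℕ} : u ∈ t.level k ↔ u ∈ t.vertices ∧ u.length = k := by
  simp [level]

/-- The vertices at generation less than `k`. -/
def below (t : FinPlaneTree) (k : ℕ) : Finset (List ℕ) := {u ∈ t.vertices | u.length < k}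

@[simp]
theorem mem_below {u : List ℕ} : u ∈ t.below k ↔ u ∈ t.vertices ∧ u.length < k := by
  simp [below]

theorem level_truncate : (t.truncate k).level k = t.level k := by
  ext u
  simp +contextual [and_assoc]

theorem card_vertices_of_truncate_eq_self (h : t.truncate k = t) :
    #t.vertices = #(t.below k) + #(t.level k) := by
  have hle := truncate_eq_self_iff.1 h
  have hlevel : t.level k = {u ∈ t.vertices | ¬ u.length < k} := by
    ext u
    simp +contextual [le_antisymm_iff, hle]
  rw [hlevel, below, card_filter_add_card_filter_not]

/-- The vertex set of the tree obtained from the first `k` generations of `t` by grafting a tree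
at each vertex of generation `k`. -/
def graftVertices (t : FinPlaneTree) (k : ℕ) (F : t.level k → FinPlaneTree) : Finset (List ℕ) :=
  t.below k ∪ univ.biUnion fun z => (F z).vertices.image (z.1 ++ ·)

section Graft

variable {F : t.level k → FinPlaneTree}

theorem mem_graftVertices {u : List ℕ} : u ∈ t.graftVertices k F ↔
    u ∈ t.below k ∨ ∃ z : t.level k, ∃ v ∈ (F z).vertices, z.1 ++ v = u := by
  simp only [graftVertices, mem_union, mem_biUnion, mem_univ, true_and, mem_image]

theorem length_of_mem_level (z : t.level k) : z.1.length = k :=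
  (mem_level.1 z.2).2

theorem le_length_append (z : t.level k) (v : List ℕ) : k ≤ (z.1 ++ v).length := by
  simp [length_of_mem_level]

theorem append_mem_graftVertices {z : t.level k} {v : List ℕ} :
    z.1 ++ v ∈ t.graftVertices k F ↔ v ∈ (F z).vertices := by
  rw [mem_graftVertices]
  constructor
  · rintro (h | ⟨z', v', hv', h⟩)
    · exact absurd (mem_below.1 h).2 (le_length_append z v).not_gt
    · obtain ⟨hz, rfl⟩ := List.append_inj h (by simp only [length_of_mem_level])
      rwa [← Subtype.ext hz]
  · exact fun h => Or.inr ⟨z, v, h, rfl⟩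

theorem exists_append_of_mem_graftVertices {u : List ℕ} (hu : u ∈ t.graftVertices k F)
    (hk : k ≤ u.length) : ∃ z : t.level k, ∃ v ∈ (F z).vertices, z.1 ++ v = u :=
  (mem_graftVertices.1 hu).resolve_left fun h => (mem_below.1 h).2.not_ge hk

theorem mem_graftVertices_of_length_le {u : List ℕ} (hu : u.length ≤ k) :
    u ∈ t.graftVertices k F ↔ u ∈ t.vertices := by
  constructor
  · rw [mem_graftVertices]
    rintro (h | ⟨z, v, -, rfl⟩)
    · exact (mem_below.1 h).1
    · obtain rfl : v = [] := List.length_eq_zero_iff.1 <| by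
        simp only [List.length_append, length_of_mem_level] at hu
        omega
      simpa using (mem_level.1 z.2).1
  · intro h
    rcases hu.lt_or_eq with hlt | heq
    · exact mem_graftVertices.2 (Or.inl (mem_below.2 ⟨h, hlt⟩))
    · simpa using (append_mem_graftVertices (F := F) (z := ⟨u, mem_level.2 ⟨h, heq⟩⟩)).2
        (F _).nil_mem

theorem exists_append_singleton_of_mem_graftVertices {u : List ℕ} {i : ℕ}
    (h : u ++ [i] ∈ t.graftVertices k F) (hk : k < (u ++ [i]).length) :
    ∃ z : t.level k, ∃ v, v ++ [i] ∈ (F z).vertices ∧ z.1 ++ v = u := by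
  obtain ⟨z, v, hv, hzv⟩ := exists_append_of_mem_graftVertices h hk.le
  rcases List.eq_nil_or_concat v with rfl | ⟨v, j, rfl⟩
  · rw [← hzv, List.append_nil, length_of_mem_level] at hk
    exact absurd hk (lt_irrefl k)
  · rw [List.concat_eq_append, ← List.append_assoc] at hzv
    obtain ⟨rfl, hij⟩ := List.append_inj' hzv rfl
    obtain rfl := List.singleton_injective hij
    exact ⟨z, v, by simpa using hv, rfl⟩

/-- The tree obtained from the first `k` generations of `t` by grafting the tree `F z` at each
vertex `z` of generation `k`. -/
def graft (t : FinPlaneTree) (k : ℕ) (F : t.level k → FinPlaneTree) : FinPlaneTree where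
  vertices := t.graftVertices k F
  nil_mem := (mem_graftVertices_of_length_le k.zero_le).2 t.nil_mem
  parent_mem {u i} h := by
    rcases le_or_gt (u ++ [i]).length k with hk | hk
    · rw [mem_graftVertices_of_length_le hk] at h
      rw [mem_graftVertices_of_length_le ((List.prefix_append u [i]).length_le.trans hk)]
      exact t.parent_mem h
    · obtain ⟨z, v, hv, rfl⟩ := exists_append_singleton_of_mem_graftVertices h hk
      exact append_mem_graftVertices.2 ((F z).parent_mem hv)
  sibling_mem {u i j} hij h := by
    rcases le_or_gt (u ++ [i]).length k with hk | hk
    · rw [mem_graftVertices_of_length_le hk] at h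
      rw [mem_graftVertices_of_length_le (by simpa using hk)]
      exact t.sibling_mem hij h
    · obtain ⟨z, v, hv, rfl⟩ := exists_append_singleton_of_mem_graftVertices h hk
      rw [List.append_assoc]
      exact append_mem_graftVertices.2 ((F z).sibling_mem hij hv)

theorem append_mem_graft {z : t.level k} {v : List ℕ} :
    z.1 ++ v ∈ (t.graft k F).vertices ↔ v ∈ (F z).vertices :=
  append_mem_graftVertices

theorem truncate_graft : (t.graft k F).truncate k = t.truncate k := by
  ext u
  simp only [mem_truncate]
  exact and_congr_left mem_graftVertices_of_length_le

theorem card_vertices_graft :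
    #(t.graft k F).vertices = #(t.below k) + ∑ z, #(F z).vertices := by
  have hbelow : Disjoint (t.below k)
      (univ.biUnion fun z => (F z).vertices.image (z.1 ++ ·)) := by
    simp only [disjoint_left, mem_biUnion, mem_univ, true_and, mem_image]
    rintro _ hu ⟨z, v, -, rfl⟩
    exact absurd (mem_below.1 hu).2 (le_length_append z v).not_gt
  have hlevel : (Set.univ : Set (t.level k)).PairwiseDisjoint
      fun z => (F z).vertices.image (z.1 ++ ·) := by
    refine fun z _ z' _ hne => disjoint_left.2 fun u hz hz' => hne ?_
    obtain ⟨v, -, rfl⟩ := mem_image.1 hz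
    obtain ⟨v', -, h⟩ := mem_image.1 hz'
    exact Subtype.ext (List.append_inj h (by simp only [length_of_mem_level])).1.symm
  calc #(t.graft k F).vertices
      = #(t.below k) + #(univ.biUnion fun z => (F z).vertices.image (z.1 ++ ·)) :=
        card_union_of_disjoint hbelow
    _ = #(t.below k) + ∑ z, #(F z).vertices := by
        rw [card_biUnion (by simpa [Set.PairwiseDisjoint, Set.Pairwise] using hlevel)]
        simp only [card_image_of_injective _ (List.append_right_injective _)]

theorem numEdges_graft (h : t.truncate k = t) :
    (t.graft k F).numEdges = t.numEdges + ∑ z, (F z).numEdges := by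
  have hgraft := card_vertices_graft (F := F)
  have ht := card_vertices_of_truncate_eq_self h
  simp only [← numEdges_add_one, sum_add_distrib, ← card_eq_sum_ones] at hgraft ht
  rw [card_univ, Fintype.card_coe] at hgraft
  omega

end Graft

theorem mem_of_truncate_eq (h : t.truncate k = t₀) (z : t₀.level k) : z.1 ∈ t.vertices := by
  subst h
  exact (mem_truncate.1 (mem_level.1 z.2).1).1

theorem graft_subtree (h : t.truncate k = t₀) :
    (t₀.graft k fun z => t.subtree z.1 (mem_of_truncate_eq h z)) = t := by
  ext u
  rcases le_or_gt u.length k with hu | hu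
  · rw [graft, mem_graftVertices_of_length_le hu, ← h, mem_truncate, and_iff_left hu]
  · constructor
    · intro hmem
      obtain ⟨z, v, hv, rfl⟩ := exists_append_of_mem_graftVertices hmem hu.le
      exact mem_subtree.1 hv
    · intro hmem
      rw [← u.take_append_drop k] at hmem ⊢
      have hlen : (u.take k).length = k := List.length_take_of_le hu.le
      have hlevel : u.take k ∈ t₀.level k := by
        rw [← h, level_truncate]
        exact mem_level.2 ⟨mem_of_append_mem hmem, hlen⟩
      exact (append_mem_graft (z := ⟨_, hlevel⟩)).2 (mem_subtree.2 hmem)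

/-- A tree is determined by its first `k` generations `t₀` and by the subtrees at the vertices
of generation `k`, which are arbitrary. -/
noncomputable def truncateFiberEquiv (h₀ : t₀.truncate k = t₀) :
    {t : FinPlaneTree // t.truncate k = t₀} ≃ (t₀.level k → FinPlaneTree) where
  toFun t z := t.1.subtree z.1 (mem_of_truncate_eq t.2 z)
  invFun F := ⟨t₀.graft k F, truncate_graft.trans h₀⟩
  left_inv t := Subtype.ext (graft_subtree t.2)
  right_inv F := by
    ext z v
    exact mem_subtree.trans append_mem_graft

theorem numEdges_eq_add_sum (h₀ : t₀.truncate k = t₀)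
    (t : {t : FinPlaneTree // t.truncate k = t₀}) :
    t.1.numEdges = t₀.numEdges + ∑ z, (truncateFiberEquiv h₀ t z).numEdges := by
  conv_lhs => rw [← (truncateFiberEquiv h₀).symm_apply_apply t]
  exact numEdges_graft h₀

end FinPlaneTree

/-! ### Generating functions -/

section GeneratingFunction

open PowerSeries

theorem natCard_sum_weight_eq_coeff_prod {ι : Type*} [Fintype ι] {α : ι → Type*}
    (w : ∀ i, α i → ℕ) [∀ i n, Finite {a // w i a = n}] (m : ℕ) :
    Nat.card {F : ∀ i, α i // ∑ i, w i (F i) = m} =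
      coeff m (∏ i, mk fun n => Nat.card {a // w i a = n}) := by
  classical
  let weights : {F : ∀ i, α i // ∑ i, w i (F i) = m} → Finset.finsuppAntidiag Finset.univ m :=
    fun F => ⟨Finsupp.equivFunOnFinite.symm fun i => w i (F.1 i), by
      simpa [Finset.mem_finsuppAntidiag] using F.2⟩
  have fiberEquiv (l : Finset.finsuppAntidiag (Finset.univ : Finset ι) m) :
      {F // weights F = l} ≃ ∀ i, {a // w i a = l.1 i} :=
    { toFun F i := ⟨F.1.1 i, DFunLike.congr_fun (congrArg Subtype.val F.2) i⟩
      invFun G := ⟨⟨fun i => (G i).1, by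
        simpa [fun i => (G i).2] using (Finset.mem_finsuppAntidiag.1 l.2).1⟩, by
        ext i
        exact (G i).2⟩ }
  have finite_fiber (l : Finset.finsuppAntidiag (Finset.univ : Finset ι) m) :
      Finite {F // weights F = l} := .of_equiv _ (fiberEquiv l).symm
  rw [← Nat.card_congr (Equiv.sigmaFiberEquiv weights), Nat.card_sigma]
  simp only [Nat.card_congr (fiberEquiv _), Nat.card_pi, coeff_prod, coeff_mk]
  exact Finset.sum_coe_sort (Finset.finsuppAntidiag Finset.univ m)
    fun l => ∏ i, Nat.card {a // w i a = l i}

theorem FinPlaneTree.natCard_numEdges_eq_and_truncate_eq {t₀ : FinPlaneTree} {k : ℕ}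
    (h₀ : t₀.truncate k = t₀) (m : ℕ) :
    Nat.card {t : FinPlaneTree // t.numEdges = t₀.numEdges + m ∧ t.truncate k = t₀} =
      coeff m (catalanSeries ^ (t₀.level k).card) := by
  have e : {t : FinPlaneTree // t.numEdges = t₀.numEdges + m ∧ t.truncate k = t₀} ≃
      {F : t₀.level k → FinPlaneTree // ∑ z, (F z).numEdges = m} :=
    (Equiv.subtypeEquivRight fun _ => and_comm).trans <|
      (Equiv.subtypeSubtypeEquivSubtypeInter _ _).symm.trans <|
      (truncateFiberEquiv h₀).subtypeEquiv fun t => by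
        rw [numEdges_eq_add_sum h₀, Nat.add_left_cancel_iff]
  rw [Nat.card_congr e, natCard_sum_weight_eq_coeff_prod fun _ => numEdges]
  simp [natCard_numEdges_eq, catalanSeries]

end GeneratingFunction

/-! ### Asymptotics of Catalan numbers -/

theorem catalan_pos (n : ℕ) : 0 < catalan n :=
  Nat.pos_of_mul_pos_left (succ_mul_catalan_eq_centralBinom n ▸ n.centralBinom_pos)

theorem catalan_cast_ne_zero (n : ℕ) : (catalan n : ℝ) ≠ 0 :=
  Nat.cast_ne_zero.2 (catalan_pos n).ne'

theorem add_two_mul_catalan_succ (n : ℕ) :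
    (n + 2) * catalan (n + 1) = 2 * (2 * n + 1) * catalan n := by
  refine Nat.eq_of_mul_eq_mul_left n.succ_pos ?_
  calc (n + 1) * ((n + 2) * catalan (n + 1))
      = (n + 1) * (n + 1).centralBinom := by rw [succ_mul_catalan_eq_centralBinom (n + 1)]
    _ = 2 * (2 * n + 1) * n.centralBinom := n.succ_mul_centralBinom_succ
    _ = (n + 1) * (2 * (2 * n + 1) * catalan n) := by
      rw [← succ_mul_catalan_eq_centralBinom n]
      ring

section Asymptotics

open Filter Topology PowerSeries

theorem tendsto_catalan_succ_div_catalan :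
    Tendsto (fun n => (catalan (n + 1) : ℝ) / catalan n) atTop (𝓝 4) := by
  have hratio (n : ℕ) : (catalan (n + 1) : ℝ) / catalan n = 4 - 6 / ((n : ℝ) + 2) := by
    have hne := catalan_cast_ne_zero n
    have hrec : ((n : ℝ) + 2) * catalan (n + 1) = 2 * (2 * n + 1) * catalan n := by
      exact_mod_cast add_two_mul_catalan_succ n
    field_simp
    linear_combination hrec
  simp only [hratio]
  have hinf : Tendsto (fun n : ℕ => (n : ℝ) + 2) atTop atTop :=
    tendsto_atTop_add_const_right _ _ tendsto_natCast_atTop_atTop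
  simpa using (hinf.const_div_atTop 6).const_sub 4

theorem tendsto_add_div_of_tendsto_succ_div {G : Type*} [GroupWithZero G] [TopologicalSpace G]
    [ContinuousMul G] {a : ℕ → G} (ha : ∀ n, a n ≠ 0) {c : G}
    (h : Tendsto (fun n => a (n + 1) / a n) atTop (𝓝 c)) (e : ℕ) :
    Tendsto (fun n => a (n + e) / a n) atTop (𝓝 (c ^ e)) := by
  induction e with
  | zero => simpa [div_self (ha _)] using tendsto_const_nhds
  | succ e ih =>
    rw [pow_succ']
    refine (((tendsto_add_atTop_iff_nat e).2 h).mul ih).congr fun n => ?_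
    rw [div_mul_div_cancel₀ (ha _), add_assoc]

theorem catalanSeries_pow_succ (z : ℕ) :
    catalanSeries ^ (z + 1) = catalanSeries ^ z + X * catalanSeries ^ (z + 2) := by
  calc catalanSeries ^ (z + 1) = catalanSeries ^ z * catalanSeries := pow_succ _ _
    _ = catalanSeries ^ z * (catalanSeries ^ 2 * X + 1) := by rw [catalanSeries_sq_mul_X_add_one]
    _ = catalanSeries ^ z + X * catalanSeries ^ (z + 2) := by ring

theorem coeff_succ_catalanSeries_pow_succ (z m : ℕ) :
    coeff (m + 1) (catalanSeries ^ (z + 1)) =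
      coeff (m + 1) (catalanSeries ^ z) + coeff m (catalanSeries ^ (z + 2)) := by
  rw [catalanSeries_pow_succ, map_add, coeff_succ_X_mul]

theorem tendsto_coeff_catalanSeries_pow_div_catalan (z : ℕ) :
    Tendsto (fun m => ((coeff m (catalanSeries ^ z) : ℕ) : ℝ) / catalan m) atTop
      (𝓝 (z * 2 ^ z / 2)) := by
  induction z using Nat.twoStepInduction with
  | zero =>
    refine tendsto_const_nhds.congr' ?_
    filter_upwards [eventually_ne_atTop 0] with m hm
    simp [coeff_one, hm]
  | one => simp [div_self (catalan_cast_ne_zero _)]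
  | more z ih₀ ih₁ =>
    have hlim := (((tendsto_add_atTop_iff_nat 1).2 ih₁).sub
      ((tendsto_add_atTop_iff_nat 1).2 ih₀)).mul tendsto_catalan_succ_div_catalan
    convert hlim.congr fun m => ?_ using 2
    · push_cast
      ring
    · rw [← sub_div, div_mul_div_cancel₀ (catalan_cast_ne_zero _),
        coeff_succ_catalanSeries_pow_succ, Nat.cast_add, add_sub_cancel_left]

namespace FinPlaneTree

variable {t₀ : FinPlaneTree} {k : ℕ}

theorem tendsto_natCard_truncate_eq_div (h₀ : t₀.truncate k = t₀) :
    Tendsto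
      (fun n => (Nat.card {t : FinPlaneTree // t.numEdges = n ∧ t.truncate k = t₀} : ℝ) /
        Nat.card {t : FinPlaneTree // t.numEdges = n})
      atTop (𝓝 ((t₀.level k).card * 2⁻¹ ^ ((t₀.below k).card + t₀.numEdges))) := by
  rw [← tendsto_add_atTop_iff_nat t₀.numEdges]
  have hlim := (tendsto_coeff_catalanSeries_pow_div_catalan (t₀.level k).card).div
    (tendsto_add_div_of_tendsto_succ_div catalan_cast_ne_zero tendsto_catalan_succ_div_catalan
      t₀.numEdges) (by positivity)
  convert hlim.congr fun m => ?_ using 2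
  · have hcard := card_vertices_of_truncate_eq_self h₀
    rw [← numEdges_add_one] at hcard
    have hpow : (2 : ℝ) ^ (t₀.level k).card * 2 ^ ((t₀.below k).card + t₀.numEdges) =
        2 * 4 ^ t₀.numEdges := by
      rw [show (4 : ℝ) = 2 ^ 2 by norm_num, ← pow_mul, ← pow_succ', ← pow_add]
      congr 1
      omega
    rw [inv_pow]
    field_simp
    linear_combination (-(t₀.level k).card : ℝ) * hpow
  · rw [add_comm m, natCard_numEdges_eq_and_truncate_eq h₀, natCard_numEdges_eq,
      Pi.div_apply, div_div_div_cancel_right₀ (catalan_cast_ne_zero m), add_comm m]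

theorem natCard_isFinTree_edges (n : ℕ) :
    Nat.card {f : List ℕ → Bool | IsFinTree f ∧ Nat.card {u | f u = true} = n + 1} =
      Nat.card {t : FinPlaneTree // t.numEdges = n} := by
  simp only [natCard_isFinTree_and, natCard_indicator_eq_add_one_iff]

theorem natCard_isFinTree_edges_truncate (h₀ : t₀.truncate k = t₀) (n : ℕ) :
    Nat.card {f : List ℕ → Bool | IsFinTree f ∧ Nat.card {u | f u = true} = n + 1 ∧
        ∀ u : List ℕ, u.length ≤ k → f u = t₀.indicator u} =
      Nat.card {t : FinPlaneTree // t.numEdges = n ∧ t.truncate k = t₀} := by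
  simp only [natCard_isFinTree_and, natCard_indicator_eq_add_one_iff,
    truncate_eq_iff_forall_indicator_eq h₀]

end FinPlaneTree

end Asymptotics

theorem HasUIPTLaw.toReal_measure_truncate_eq {Ω : Type*} [MeasurableSpace Ω] {P : Measure Ω}
    {T : Ω → List ℕ → Bool} (hT : HasUIPTLaw P T) {t₀ : FinPlaneTree} {k : ℕ}
    (h₀ : t₀.truncate k = t₀) :
    (P {ω | ∀ u : List ℕ, u.length ≤ k → T ω u = t₀.indicator u}).toReal =
      (t₀.level k).card * 2⁻¹ ^ ((t₀.below k).card + t₀.numEdges) := by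
  have hlevel : Nat.card {u | t₀.indicator u = true ∧ u.length = k} = (t₀.level k).card := by
    simp [FinPlaneTree.level]
  have hbelow : Nat.card {u | t₀.indicator u = true ∧ u.length < k} = (t₀.below k).card := by
    simp [FinPlaneTree.below]
  have hcard : Nat.card {u | t₀.indicator u = true} = t₀.numEdges + 1 :=
    FinPlaneTree.natCard_indicator_eq_add_one_iff.2 rfl
  rw [hT.2 k _ t₀.isFinTree_indicator (by simpa using FinPlaneTree.truncate_eq_self_iff.1 h₀),
    hlevel, hbelow, hcard]
  simp

/-- Convergence of the truncated uniform plane trees towards the uniform infinite plane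
tree: for every `k ≥ 0` and every finite plane tree `t₀` of height at most `k`, the
proportion of plane trees with `n` edges (i.e. `n+1` vertices) whose first `k` generations
coincide with `t₀` converges, as `n → ∞`, to the probability that the first `k`
generations of `T_∞` coincide with `t₀`. -/
theorem uniform_tree_truncation_converges_to_uipt
    {Ω : Type*} [MeasurableSpace Ω] (P : Measure Ω) [IsProbabilityMeasure P]
    (T : Ω → List ℕ → Bool) (hTm : Measurable T) (hT : HasUIPTLaw P T) :
    ∀ (k : ℕ) (t₀ : List ℕ → Bool), IsFinTree t₀ → (∀ u, t₀ u = true → u.length ≤ k) →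
      Filter.Tendsto
        (fun n : ℕ =>
          (Nat.card {t : List ℕ → Bool | IsFinTree t ∧
              Nat.card {u : List ℕ | t u = true} = n + 1 ∧
              ∀ u : List ℕ, u.length ≤ k → t u = t₀ u} : ℝ) /
          (Nat.card {t : List ℕ → Bool | IsFinTree t ∧
              Nat.card {u : List ℕ | t u = true} = n + 1} : ℝ))
        Filter.atTop
        (nhds (P {ω | ∀ u : List ℕ, u.length ≤ k → T ω u = t₀ u}).toReal) := by
  intro k t₀ h₀ hk
  obtain ⟨t, rfl⟩ := FinPlaneTree.exists_indicator_eq h₀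
  have ht : t.truncate k = t := FinPlaneTree.truncate_eq_self_iff.2 (by simpa using hk)
  simp only [hT.toReal_measure_truncate_eq ht, FinPlaneTree.natCard_isFinTree_edges,
    FinPlaneTree.natCard_isFinTree_edges_truncate ht]
  exact FinPlaneTree.tendsto_natCard_truncate_eq_div ht
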